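/- Equip P = k[x₁,x₂,x₃] with the Poisson bracket {x₁,x₂} = x₁² + x₂², {x₂,x₃} = 3x₁² + 2x₁x₃, {x₃,x₁} = 2x₂x₃. Then for an invertible matrix M = (a_{ij}), φ_M is a graded Poisson automorphism of P if and only if either M = a·I₃ for some a ∈ k \ {0}, or M = [[−a/2, (s/2)a, 0],[−(s/2)a, −a/2, 0],[(9/8)a, −(3s/8)a, a]] for some a ∈ k \ {0} and some s ∈ k with s² = 3. In particular, P has no Poisson reflections. -/

import Mathlib

open MvPolynomial

/-- The bracket on `k[x₁,x₂,x₃]` determined by the values `p12 = {x₁,x₂}`, `p23 = {x₂,x₃}`,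
`p31 = {x₃,x₁}` via `{f,g} = Σ_{i<j} (∂f/∂xᵢ·∂g/∂xⱼ − ∂f/∂xⱼ·∂g/∂xᵢ)·{xᵢ,xⱼ}`. -/
noncomputable def jacBracket {k : Type*} [Field k] (p12 p23 p31 : MvPolynomial (Fin 3) k)
    (f g : MvPolynomial (Fin 3) k) : MvPolynomial (Fin 3) k :=
  (pderiv 0 f * pderiv 1 g - pderiv 1 f * pderiv 0 g) * p12 +
    (pderiv 1 f * pderiv 2 g - pderiv 2 f * pderiv 1 g) * p23 +
    (pderiv 2 f * pderiv 0 g - pderiv 0 f * pderiv 2 g) * p31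

/-- The graded algebra endomorphism `φ_M` of `k[x₁,x₂,x₃]` with `φ_M(xᵢ) = Σⱼ M i j · xⱼ`. -/
noncomputable def phiM {k : Type*} [Field k] (M : Matrix (Fin 3) (Fin 3) k) :
    MvPolynomial (Fin 3) k →ₐ[k] MvPolynomial (Fin 3) k :=
  aeval fun i => ∑ j, C (M i j) * X j

/-- `φ_M` is a graded Poisson automorphism (for invertible `M`) iff it preserves the bracket. -/
def IsPoissonAut {k : Type*} [Field k]
    (br : MvPolynomial (Fin 3) k → MvPolynomial (Fin 3) k → MvPolynomial (Fin 3) k)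
    (M : Matrix (Fin 3) (Fin 3) k) : Prop :=
  ∀ f g, phiM M (br f g) = br (phiM M f) (phiM M g)

/-- `φ_M` is a Poisson reflection: a graded Poisson automorphism of finite order whose
eigenvalues are `1, 1, ξ` for some root of unity `ξ ≠ 1`. -/
def IsPoissonReflection {k : Type*} [Field k]
    (br : MvPolynomial (Fin 3) k → MvPolynomial (Fin 3) k → MvPolynomial (Fin 3) k)
    (M : Matrix (Fin 3) (Fin 3) k) : Prop :=
  IsPoissonAut br M ∧ (∃ n, 0 < n ∧ M ^ n = 1) ∧
    ∃ ξ : k, ξ ≠ 1 ∧ (∃ m, 0 < m ∧ ξ ^ m = 1) ∧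
      M.charpoly = (Polynomial.X - 1) ^ 2 * (Polynomial.X - Polynomial.C ξ)


/-- Chain rule for the linear substitution `phiM M`. -/
theorem pderiv_phiM {k : Type*} [Field k] (M : Matrix (Fin 3) (Fin 3) k) (i : Fin 3)
    (f : MvPolynomial (Fin 3) k) :
    pderiv i (phiM M f) = ∑ j, C (M j i) * phiM M (pderiv j f) := by
  induction f using MvPolynomial.induction_on with
  | C a => simp [phiM, ← MvPolynomial.algebraMap_eq]
  | add p q hp hq => simp only [map_add, hp, hq, mul_add, Finset.sum_add_distrib]
  | mul_X p n hp =>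
    have hX : pderiv i (phiM M (X n)) = C (M n i) := by
      simp [phiM, pderiv_X, Pi.single_apply, Finset.sum_ite_eq]
    have hs : ∀ j, phiM M (pderiv j (X n : MvPolynomial (Fin 3) k))
        = if j = n then 1 else 0 := by
      intro j
      rw [pderiv_X, Pi.single_apply]
      by_cases h : j = n
      · simp [h]
      · simp [h, Ne.symm h]
    simp only [map_mul, map_add, Derivation.leibniz, smul_eq_mul, hX, hp, hs, mul_add,
      Finset.sum_add_distrib]
    simp only [mul_ite, mul_one, mul_zero, Finset.sum_ite_eq', Finset.mem_univ, if_true,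
      Finset.mul_sum]
    congr 1
    · ring
    · exact Finset.sum_congr rfl fun j _ => by ring

/-- It suffices to test preservation of the bracket on the generators. -/
theorem isPoissonAut_of_gens {k : Type*} [Field k] (p q r : MvPolynomial (Fin 3) k)
    (M : Matrix (Fin 3) (Fin 3) k)
    (h1 : phiM M p = C (M 0 0 * M 1 1 - M 0 1 * M 1 0) * p
      + C (M 0 1 * M 1 2 - M 0 2 * M 1 1) * q + C (M 0 2 * M 1 0 - M 0 0 * M 1 2) * r)
    (h2 : phiM M q = C (M 1 0 * M 2 1 - M 1 1 * M 2 0) * p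
      + C (M 1 1 * M 2 2 - M 1 2 * M 2 1) * q + C (M 1 2 * M 2 0 - M 1 0 * M 2 2) * r)
    (h3 : phiM M r = C (M 2 0 * M 0 1 - M 2 1 * M 0 0) * p
      + C (M 2 1 * M 0 2 - M 2 2 * M 0 1) * q + C (M 2 2 * M 0 0 - M 2 0 * M 0 2) * r) :
    IsPoissonAut (jacBracket p q r) M := by
  intro f g
  simp only [jacBracket, pderiv_phiM, Fin.sum_univ_three, map_add, map_mul, map_sub, h1, h2, h3]
  ring

theorem gens_of_isPoissonAut {k : Type*} [Field k] (p q r : MvPolynomial (Fin 3) k)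
    (M : Matrix (Fin 3) (Fin 3) k) (h : IsPoissonAut (jacBracket p q r) M) :
    (phiM M p = C (M 0 0 * M 1 1 - M 0 1 * M 1 0) * p
      + C (M 0 1 * M 1 2 - M 0 2 * M 1 1) * q + C (M 0 2 * M 1 0 - M 0 0 * M 1 2) * r) ∧
    (phiM M q = C (M 1 0 * M 2 1 - M 1 1 * M 2 0) * p
      + C (M 1 1 * M 2 2 - M 1 2 * M 2 1) * q + C (M 1 2 * M 2 0 - M 1 0 * M 2 2) * r) ∧
    (phiM M r = C (M 2 0 * M 0 1 - M 2 1 * M 0 0) * p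
      + C (M 2 1 * M 0 2 - M 2 2 * M 0 1) * q + C (M 2 2 * M 0 0 - M 2 0 * M 0 2) * r) := by
  have e1 := h (X 0) (X 1)
  have e2 := h (X 1) (X 2)
  have e3 := h (X 2) (X 0)
  simp only [jacBracket, pderiv_phiM, Fin.sum_univ_three, pderiv_X] at e1 e2 e3
  simp [Pi.single_apply] at e1 e2 e3
  refine ⟨?_, ?_, ?_⟩
  · rw [e1]; simp only [map_sub, map_mul]
  · rw [e2]; simp only [map_sub, map_mul]
  · rw [e3]; simp only [map_sub, map_mul]

/-- The system of coefficient equations has only the two expected families of solutions. -/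
theorem solve_system {k : Type*} [Field k] [CharZero k] (a b c d e f g h i : k)
    (hdet : a * e * i - a * f * h - b * d * i + b * f * g + c * d * h - c * e * g ≠ 0)
    (H1 : ∀ x y z : k, (a*x+b*y+c*z)^2 + (d*x+e*y+f*z)^2 = (a*e-b*d)*(x^2+y^2)
      + (b*f-c*e)*(3*x^2+2*x*z) + (c*d-a*f)*(2*y*z))
    (H2 : ∀ x y z : k, 3*(a*x+b*y+c*z)^2 + 2*(a*x+b*y+c*z)*(g*x+h*y+i*z)
      = (d*h-e*g)*(x^2+y^2) + (e*i-f*h)*(3*x^2+2*x*z) + (f*g-d*i)*(2*y*z))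
    (H3 : ∀ x y z : k, 2*(d*x+e*y+f*z)*(g*x+h*y+i*z)
      = (g*b-h*a)*(x^2+y^2) + (h*c-i*b)*(3*x^2+2*x*z) + (i*a-g*c)*(2*y*z)) :
    (c = 0 ∧ f = 0 ∧ b = 0 ∧ d = 0 ∧ g = 0 ∧ h = 0 ∧ e = a ∧ i = a ∧ a ≠ 0) ∨
    ∃ s : k, i ≠ 0 ∧ s^2 = 3 ∧ a = -i/2 ∧ b = s*i/2 ∧ c = 0 ∧ d = -(s*i)/2 ∧ e = -i/2 ∧ f = 0
      ∧ g = 9*i/8 ∧ h = -(3*s*i)/8 := by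
  have z1 := H1 0 0 1
  have z2 := H2 0 0 1
  have z3 := H3 0 0 1
  have hcf : c = 0 ∧ f = 0 := by
    have hfi : f * i = 0 := by linear_combination z3 / 2
    rcases mul_eq_zero.mp hfi with h0 | h0
    · subst h0
      exact ⟨by simpa using (show c^2 = 0 by linear_combination z1), rfl⟩
    · subst h0
      have hc : c = 0 := by simpa using (show c^2 = 0 by linear_combination z2 / 3)
      subst hc
      exact ⟨rfl, by simpa using (show f^2 = 0 by linear_combination z1)⟩
  obtain ⟨rfl, rfl⟩ := hcf
  have x1 := H1 1 0 0
  have y1 := H1 0 1 0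
  have w1 := H1 1 1 0
  have x2 := H2 1 0 0
  have y2 := H2 0 1 0
  have w2 := H2 1 1 0
  have x3 := H3 1 0 0
  have y3 := H3 0 1 0
  have w3 := H3 1 1 0
  have hD : (a*e - b*d) ≠ 0 := fun h0 => hdet (by linear_combination i * h0)
  have hi : i ≠ 0 := fun h0 => hdet (by rw [h0]; ring)
  have q1 : a*b + d*e = 0 := by linear_combination (w1 - x1 - y1) / 2
  have he : e = a := mul_left_cancel₀ hD (by linear_combination d * q1 - e * x1)
  have hb : b = -d := mul_left_cancel₀ hD (by linear_combination a * q1 - b * x1)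
  subst he hb
  have r1 : e*g + d*h = 0 := by linear_combination (w3 - x3 - y3) / 2
  have r2 : d*g + 3*e*h = 0 := by linear_combination y3
  have r3 : 3*d^2 - 3*d*h + e*g = 0 := by linear_combination y2
  have r4 : -3*e*d + e*h - d*g = 0 := by linear_combination (w2 - x2 - y2) / 2
  have r5 : 3*e^2+3*e*g = d*h+3*e*i := by linear_combination x2
  by_cases hd : d = 0
  · left
    subst hd
    have ha : e ≠ 0 := fun h0 => hD (by rw [h0]; ring)
    have hg : g = 0 := mul_left_cancel₀ ha (by linear_combination r1)
    have hh : h = 0 := mul_left_cancel₀ ha (by linear_combination r2 / 3)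
    refine ⟨rfl, rfl, by simp, rfl, hg, hh, rfl, ?_, ha⟩
    exact mul_left_cancel₀ ha (by linear_combination -r5/3 + e * hg)
  · right
    have hh : h = 3*d/4 := mul_left_cancel₀ hd (by linear_combination (r1 - r3) / 4)
    have hg : g = -9*e/4 := mul_left_cancel₀ hd (by linear_combination r2 - 3 * e * hh)
    subst hh hg
    have hs : d^2 = 3*e^2 := by linear_combination 4/3 * r1
    have ha : e ≠ 0 := fun h0 => hd (by simpa [h0] using hs)
    have hie : i = -2*e := mul_left_cancel₀ ha (by linear_combination -r5/3 - hs/4)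
    subst hie
    refine ⟨d / e, hi, ?_, ?_, ?_, rfl, ?_, ?_, rfl, ?_, ?_⟩
    · rw [div_pow, hs]; field_simp
    all_goals (field_simp; try ring)

/-- Case `{x₁,x₂} = x₁² + x₂²`, `{x₂,x₃} = 3x₁² + 2x₁x₃`, `{x₃,x₁} = 2x₂x₃`. -/
theorem stmt_8 {k : Type*} [Field k] [IsAlgClosed k] [CharZero k]
    (M : Matrix (Fin 3) (Fin 3) k) (hM : IsUnit M.det) :
    (IsPoissonAut (jacBracket (X 0 ^ 2 + X 1 ^ 2) (3 * X 0 ^ 2 + 2 * X 0 * X 2)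
        (2 * X 1 * X 2)) M ↔
      (∃ a : k, a ≠ 0 ∧ M = a • (1 : Matrix (Fin 3) (Fin 3) k)) ∨
        (∃ a s : k, a ≠ 0 ∧ s ^ 2 = 3 ∧
          M = !![-a / 2, s * a / 2, 0; -(s * a) / 2, -a / 2, 0;
                 9 * a / 8, -(3 * s * a) / 8, a])) ∧
    ¬ IsPoissonReflection (jacBracket (X 0 ^ 2 + X 1 ^ 2) (3 * X 0 ^ 2 + 2 * X 0 * X 2)
        (2 * X 1 * X 2)) M := by
  have key : IsPoissonAut (jacBracket (X 0 ^ 2 + X 1 ^ 2) (3 * X 0 ^ 2 + 2 * X 0 * X 2)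
        (2 * X 1 * X 2)) M ↔
      (∃ a : k, a ≠ 0 ∧ M = a • (1 : Matrix (Fin 3) (Fin 3) k)) ∨
        (∃ a s : k, a ≠ 0 ∧ s ^ 2 = 3 ∧
          M = !![-a / 2, s * a / 2, 0; -(s * a) / 2, -a / 2, 0;
                 9 * a / 8, -(3 * s * a) / 8, a]) := by
    constructor
    · intro h
      obtain ⟨e1, e2, e3⟩ := gens_of_isPoissonAut _ _ _ M h
      have ev : ∀ (x y z : k), ∀ p q : MvPolynomial (Fin 3) k, p = q →
          eval ![x, y, z] p = eval ![x, y, z] q := fun x y z p q h => by rw [h]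
      have hdet : M.det ≠ 0 := hM.ne_zero
      rw [Matrix.det_fin_three] at hdet
      have := solve_system (M 0 0) (M 0 1) (M 0 2) (M 1 0) (M 1 1) (M 1 2) (M 2 0) (M 2 1) (M 2 2)
        (fun h0 => hdet (by linear_combination h0))
        (fun x y z => by
          have := ev x y z _ _ e1
          simp [phiM, Fin.sum_univ_three, map_ofNat] at this
          linear_combination this)
        (fun x y z => by
          have := ev x y z _ _ e2
          simp [phiM, Fin.sum_univ_three, map_ofNat] at this
          linear_combination this)
        (fun x y z => by
          have := ev x y z _ _ e3
          simp [phiM, Fin.sum_univ_three, map_ofNat] at this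
          linear_combination this)
      rcases this with ⟨hc, hf, hb, hd, hg, hh, he, hi, ha⟩ | ⟨s, h0, hs, ha, hb, hc, hd, he, hf, hg, hh⟩
      · left
        refine ⟨M 0 0, ha, ?_⟩
        ext i j
        fin_cases i <;> fin_cases j <;> simp [hc, hf, hb, hd, hg, hh, he, hi]
      · right
        refine ⟨M 2 2, s, h0, hs, ?_⟩
        ext i j
        fin_cases i <;> fin_cases j <;> simp
        all_goals assumption
    · rintro (⟨a, ha, rfl⟩ | ⟨a, s, ha, hs, rfl⟩)
      · apply isPoissonAut_of_gens
        all_goals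
          simp [phiM, Fin.sum_univ_three, map_ofNat]
          try ring
      · have hS : (C s : MvPolynomial (Fin 3) k) ^ 2 = 3 := by
          rw [← map_pow, hs]; exact map_ofNat C 3
        obtain ⟨t, rfl⟩ : ∃ t, a = 8 * t := ⟨a / 8, by field_simp⟩
        have E : !![-(8*t) / 2, s * (8*t) / 2, 0; -(s * (8*t)) / 2, -(8*t) / 2, 0;
                 9 * (8*t) / 8, -(3 * s * (8*t)) / 8, (8*t)] =
            !![-(4*t), 4 * s * t, 0; -(4 * s * t), -(4*t), 0; 9 * t, -(3 * s * t), 8*t] := by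
          ext i j
          fin_cases i <;> fin_cases j <;> simp <;> ring
        rw [E]
        have h3 : (C (3:k) : MvPolynomial (Fin 3) k) = 3 := map_ofNat C 3
        have h4 : (C (4:k) : MvPolynomial (Fin 3) k) = 4 := map_ofNat C 4
        have h8 : (C (8:k) : MvPolynomial (Fin 3) k) = 8 := map_ofNat C 8
        have h9 : (C (9:k) : MvPolynomial (Fin 3) k) = 9 := map_ofNat C 9
        apply isPoissonAut_of_gens
        · simp [phiM, Fin.sum_univ_three, map_ofNat, h3, h4, h8, h9]
          ring
        · simp [phiM, Fin.sum_univ_three, map_ofNat, h3, h4, h8, h9]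
          linear_combination (12 * C t ^ 2 * (X 1 ^ 2 - X 0 ^ 2)) * hS
        · simp [phiM, Fin.sum_univ_three, map_ofNat, h3, h4, h8, h9]
          linear_combination (24 * C t ^ 2 * X 0 * X 1) * hS
  refine ⟨key, ?_⟩
  rintro ⟨hP, -, ξ, hξ, -, hc⟩
  have ev : ∀ x : k, (x • (1 : Matrix (Fin 3) (Fin 3) k) - M).det = (x - 1)^2 * (x - ξ) := by
    intro x
    have := congrArg (Polynomial.eval x) hc
    rw [Matrix.eval_charpoly] at this
    simpa [Matrix.smul_one_eq_diagonal, Matrix.scalar_apply] using this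
  rcases key.mp hP with ⟨a, ha, rfl⟩ | ⟨a, s, ha, hs, rfl⟩
  · have h1 := ev 1
    have h2 := ev ξ
    simp [Matrix.det_fin_three, sub_eq_zero] at h1 h2
    exact hξ (by rw [h2, h1])
  · have F : ∀ x : k, x^3 - a^3 = (x - 1)^2 * (x - ξ) := by
      intro x
      rw [← ev x]
      simp [Matrix.det_fin_three]
      linear_combination (-(a^2 * (x - a)) / 4) * hs
    have f0 := F 0
    have f2 := F 2
    have : (6 : k) = 0 := by linear_combination f2 - f0
    norm_num at this
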